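/- Let k ≥ 2 and j ∈ {1,…,k−1}. There exists a positive constant d̄ such that with high probability, for all p ≥ p_j^− simultaneously, either N_{G_p} is empty or the minimum cardinality of the support of an element of N_{G_p} is less than d̄; here p_j^− := (1 − 1/√(log n))·(j+1)·(log n)·(k−j)!/((k−j+1)·n^{k−j}). -/

import Mathlib

open MeasureTheory Filter

attribute [local instance] Classical.propDecidable

namespace RSC

variable {V : Type*}

/-- `A` is an `i`-dimensional simplex of the complex `G`. -/
def IsSimplex (G : Set (Finset V)) (i : ℕ) (A : Finset V) : Prop :=
  A ∈ G ∧ A.card = i + 1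

/-- A `k`-dimensional simplicial complex on vertex set `V`. -/
structure IsKComplex (G : Set (Finset V)) (k : ℕ) : Prop where
  down : ∀ A ∈ G, ∀ B, B ⊆ A → B.Nonempty → B ∈ G
  singletons : ∀ v : V, ({v} : Finset V) ∈ G
  dim : ∀ A ∈ G, A.card ≤ k + 1

/-- `i`-cochains with `F₂`-coefficients. -/
abbrev Cochain (G : Set (Finset V)) (i : ℕ) : Type _ :=
  {A : Finset V // IsSimplex G i A} → ZMod 2

/-- The coboundary map `δ^i : C^i(G) → C^{i+1}(G)`. -/
noncomputable def coboundary (G : Set (Finset V)) (i : ℕ) :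
    Cochain G i →ₗ[ZMod 2] Cochain G (i + 1) where
  toFun f := fun σ => ∑ τ ∈ Finset.powersetCard (i + 1) (σ : Finset V),
      if h : IsSimplex G i τ then f ⟨τ, h⟩ else 0
  map_add' f g := by
    funext σ
    simp only [Pi.add_apply, ← Finset.sum_add_distrib]
    refine Finset.sum_congr rfl fun τ _ => ?_
    by_cases h : IsSimplex G i τ <;> simp [h]
  map_smul' c f := by
    funext σ
    simp only [Pi.smul_apply, RingHom.id_apply, Finset.smul_sum]
    refine Finset.sum_congr rfl fun τ _ => ?_
    by_cases h : IsSimplex G i τ <;> simp [h]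

/-- The submodule of `i`-cocycles. -/
noncomputable def cocycles (G : Set (Finset V)) (i : ℕ) : Submodule (ZMod 2) (Cochain G i) :=
  LinearMap.ker (coboundary G i)

/-- The submodule of `i`-coboundaries (`δ^{-1}` is the zero map). -/
noncomputable def coboundaries (G : Set (Finset V)) : (i : ℕ) → Submodule (ZMod 2) (Cochain G i)
  | 0 => ⊥
  | (i + 1) => LinearMap.range (coboundary G i)

/-- The `i`-th cohomology group `H^i(G;F₂) = ker δ^i / im δ^{i-1}`. -/
noncomputable abbrev cohomology (G : Set (Finset V)) (i : ℕ) :=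
  (cocycles G i) ⧸ ((coboundaries G i).comap (cocycles G i).subtype)

/-- `F₂`-cohomological `j`-connectedness: `H^0 ≅ F₂` and `H^i = 0` for `1 ≤ i ≤ j`. -/
def CohomConnected (G : Set (Finset V)) (j : ℕ) : Prop :=
  Nonempty (cohomology G 0 ≃ₗ[ZMod 2] ZMod 2) ∧
    ∀ i, 1 ≤ i → i ≤ j → Subsingleton (cohomology G i)

/-- The `j`-flower in `K` with centre `C`: the set of petals `C ∪ {w}`, `w ∈ K \ C`. -/
def Flower [DecidableEq V] (K C : Finset V) : Set (Finset V) :=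
  {P | ∃ w ∈ K \ C, P = insert w C}

/-- A copy of `M_j^-`: a `k`-simplex `K` together with a `(j-1)`-simplex `C ⊆ K` such that
each petal of the flower `F(K,C)` is contained in no `k`-simplex other than `K`. -/
def IsMjMinus [DecidableEq V] (G : Set (Finset V)) (k j : ℕ) (K C : Finset V) : Prop :=
  IsSimplex G k K ∧ C ∈ G ∧ C.card = j ∧ C ⊆ K ∧
    ∀ P ∈ Flower K C, ∀ K', IsSimplex G k K' → P ⊆ K' → K' = K

/-- A `j`-cycle: every `(j-1)`-simplex lies in an even number of members of `J`. -/
def IsCycle (G : Set (Finset V)) (j : ℕ) (J : Finset (Finset V)) : Prop :=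
  (∀ σ ∈ J, IsSimplex G j σ) ∧
    ∀ τ : Finset V, τ.card = j → Even (J.filter (fun σ => τ ⊆ σ)).card

/-- A copy of `M_j`. -/
def IsMj [DecidableEq V] (G : Set (Finset V)) (k j : ℕ) (K C : Finset V)
    (J : Finset (Finset V)) : Prop :=
  IsMjMinus G k j K C ∧ IsCycle G j J ∧ ∃! P : Finset V, P ∈ J ∧ P ∈ Flower K C

/-- A `j`-shell: a `(j+2)`-set all of whose `(j+1)`-subsets are `j`-simplices. -/
def IsShell (G : Set (Finset V)) (j : ℕ) (A : Finset V) : Prop :=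
  A.card = j + 2 ∧ ∀ τ ⊆ A, τ.card = j + 1 → τ ∈ G

/-- A copy of `M_j^*`. -/
def IsMjStar [DecidableEq V] (G : Set (Finset V)) (k j : ℕ) (K C : Finset V) (w a : V) : Prop :=
  IsMjMinus G k j K C ∧ w ∈ K \ C ∧ a ∉ K ∧ IsShell G j (insert a (insert w C))

/-- The support of a cochain. -/
def cochainSupport {G : Set (Finset V)} {i : ℕ} (f : Cochain G i) : Set (Finset V) :=
  {A | ∃ h : IsSimplex G i A, f ⟨A, h⟩ = 1}

/-- A cochain arising from a copy of `M_j^-`: its support is the flower `F(K,C)`. -/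
def ArisesFrom [DecidableEq V] (G : Set (Finset V)) (k j : ℕ) (f : Cochain G j)
    (K C : Finset V) : Prop :=
  IsMjMinus G k j K C ∧ cochainSupport f = Flower K C

/-- A `j`-cocycle generated by copies of `M_j^-`: it differs by a `j`-coboundary from a sum
of `j`-cocycles arising from copies of `M_j^-`. -/
def GeneratedByMjMinus [DecidableEq V] (G : Set (Finset V)) (k j : ℕ) (f : Cochain G j) : Prop :=
  ∃ (m : ℕ) (fs : Fin m → Cochain G j),
    (∀ i, ∃ K C, ArisesFrom G k j (fs i) K C) ∧
      f - (∑ i, fs i) ∈ coboundaries G j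

/-- Membership in `N_G`: a `j`-cocycle not generated by copies of `M_j^-`. -/
def InNG [DecidableEq V] (G : Set (Finset V)) (k j : ℕ) (f : Cochain G j) : Prop :=
  f ∈ cocycles G j ∧ ¬ GeneratedByMjMinus G k j f

/-- Traversability: the transitive closure of "lying in a common `k`-simplex" is `S × S`. -/
def Traversable (G : Set (Finset V)) (k : ℕ) (S : Set (Finset V)) : Prop :=
  ∀ σ₁ ∈ S, ∀ σ₂ ∈ S,
    Relation.TransGen
      (fun a b => a ∈ S ∧ b ∈ S ∧ ∃ K, IsSimplex G k K ∧ a ⊆ K ∧ b ⊆ K) σ₁ σ₂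

/-- A local obstacle: a `k`-simplex containing at least `k-j+1` many `j`-simplices,
each lying in no other `k`-simplex. -/
def IsLocalObstacle (G : Set (Finset V)) (k j : ℕ) (K : Finset V) : Prop :=
  IsSimplex G k K ∧
    k - j + 1 ≤ {σ : Finset V | IsSimplex G j σ ∧ σ ⊆ K ∧
      ∀ K', IsSimplex G k K' → σ ⊆ K' → K' = K}.ncard

/-- The random complex `G_p` given birth times `t`: all singletons together with all
non-empty subsets of `(k+1)`-sets with birth time at most `p`. -/
def complexAt (k n : ℕ) (t : Finset (Fin n) → ℝ) (p : ℝ) : Set (Finset (Fin n)) :=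
  {A | (∃ v, A = {v}) ∨
    (A.Nonempty ∧ ∃ K : Finset (Fin n), K.card = k + 1 ∧ t K ≤ p ∧ A ⊆ K)}

/-- The distribution of birth times: i.i.d. uniform on `[0,1]`. -/
noncomputable def birthMeasure (n : ℕ) : Measure (Finset (Fin n) → ℝ) :=
  Measure.pi fun _ => volume.restrict (Set.Icc (0 : ℝ) 1)

/-- `p_{M_j}`: the supremum of the probabilities `p ∈ [0,1]` at which `G_p` contains
a copy of `M_j`. -/
noncomputable def pMj (k j n : ℕ) (t : Finset (Fin n) → ℝ) : ℝ :=
  sSup {p : ℝ | p ∈ Set.Icc (0 : ℝ) 1 ∧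
    ∃ K C J, IsMj (complexAt k n t p) k j K C J}

/-- The threshold `p_j`. -/
noncomputable def pjThreshold (k j n : ℕ) : ℝ :=
  ((j + 1 : ℝ) * Real.log n + Real.log (Real.log n)) * (Nat.factorial (k - j)) /
    (((k - j + 1 : ℕ) : ℝ) * (n : ℝ) ^ (k - j))

/-- `p_j^-`. -/
noncomputable def pjMinus (k j n : ℕ) : ℝ :=
  (1 - 1 / Real.sqrt (Real.log n)) * ((j + 1 : ℝ) * Real.log n) * (Nat.factorial (k - j)) /
    (((k - j + 1 : ℕ) : ℝ) * (n : ℝ) ^ (k - j))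

/-- `p_{j-1}^-`. -/
noncomputable def pjPrevMinus (k j n : ℕ) : ℝ :=
  (1 - 1 / Real.sqrt (Real.log n)) * ((j : ℝ) * Real.log n) * (Nat.factorial (k - j + 1)) /
    (((k - j + 2 : ℕ) : ℝ) * (n : ℝ) ^ (k - j + 1))

/-- `p_j^{(1)}`. -/
noncomputable def pjOne (k j n : ℕ) : ℝ :=
  1 / (10 * ((j : ℝ) + 1) * (Nat.choose (k + 1) (j + 1)) * (n : ℝ) ^ (k - j))

/-- The number of copies of `M_j^-` in `G`. -/
noncomputable def countMjMinus (k j : ℕ) {n : ℕ} (G : Set (Finset (Fin n))) : ℕ :=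
  {x : Finset (Fin n) × Finset (Fin n) | IsMjMinus G k j x.1 x.2}.ncard

/-- The number of copies of `M_j^*` in `G`. -/
noncomputable def countMjStar (k j : ℕ) {n : ℕ} (G : Set (Finset (Fin n))) : ℕ :=
  {x : Finset (Fin n) × Finset (Fin n) × Fin n × Fin n |
    IsMjStar G k j x.1 x.2.1 x.2.2.1 x.2.2.2}.ncard

/-!
Sums of cocycles arising from copies of `M_j^-`, up to coboundaries, form a submodule `W`, and only
`coboundaries ≤ W` matters. Let `f` be a cocycle outside `W` with support `S` of minimum size. If
`S` split into two parts that no `k`-simplex meets both, each part would carry a cocycle and one of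
them would lie outside `W`; so `S` is connected through `k`-simplices. Moreover, for every vertex
`v`, adding to `f` the coboundary of its contraction along `v` does not shrink the support, and
averaging over `v` (Meshulam and Wallach) yields `≥ c * |S| * n ^ (k - j)` sets of size `k + 1` that
cannot be simplices.

A connected `S` is found by a search that uses `k`-simplices, so with
`x = p * n ^ (k - j)` the sets `S` of size `s` have total weight `(1 + O(x)) ^ (2 * s)` per starting
`j`-simplex, while the missing `(k + 1)`-sets cost `exp (-c * s * x)`. Since `x` has order at least
`log n`, this is at most `exp (-c / 2 * s * x)`, which beats the number of starting simplices once
`s ≥ d` for a constant `d`. All `p ≥ p₀` are treated at once by covering them with the intervals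
`[(r + 1) * p₀, (r + 2) * p₀]`: the `k`-simplices used are born by the right end, the missing ones
are unborn at the left end.
-/

open scoped Finset ENNReal

section FaceSum

variable {R : Type*}

/-- The sum of `h` over the `m`-element subsets of `A`: the coboundary operator on functions
defined on all finite sets, without reference to a complex. -/
def faceSum [AddCommMonoid R] (m : ℕ) (h : Finset V → R) (A : Finset V) : R :=
  ∑ τ ∈ Finset.powersetCard m A, h τ

/-- The contraction of `h` by the vertex `v`, the algebraic counterpart of coning with apex `v`. -/
noncomputable def contract [Zero R] (v : V) (h : Finset V → R) (τ : Finset V) : R :=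
  if v ∈ τ then 0 else h (insert v τ)

lemma faceSum_card_self [AddCommMonoid R] (h : Finset V → R) {m : ℕ} {A : Finset V}
    (hA : #A = m) : faceSum m h A = h A := by
  simp [faceSum, ← hA]

lemma faceSum_insert [AddCommMonoid R] (h : Finset V → R) (m : ℕ) {v : V} {σ : Finset V}
    (hv : v ∉ σ) :
    faceSum (m + 1) h (insert v σ) = faceSum (m + 1) h σ + faceSum m (contract v h) σ := by
  have notMem_of_face {n : ℕ} : ∀ τ ∈ Finset.powersetCard n σ, v ∉ τ := fun τ hτ hvτ =>
    hv ((Finset.mem_powersetCard.1 hτ).1 hvτ)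
  rw [faceSum, Finset.powersetCard_succ_insert hv, Finset.sum_union, Finset.sum_image]
  · refine congrArg (faceSum (m + 1) h σ + ·) (Finset.sum_congr rfl fun τ hτ => ?_)
    rw [contract, if_neg (notMem_of_face τ hτ)]
  · intro τ hτ τ' hτ' heq
    rw [← Finset.erase_insert (notMem_of_face τ hτ), heq,
      Finset.erase_insert (notMem_of_face τ' hτ')]
  · refine Finset.disjoint_left.2 fun τ hτ hτ' => notMem_of_face τ hτ ?_
    obtain ⟨ρ, -, rfl⟩ := Finset.mem_image.1 hτ'
    exact Finset.mem_insert_self v ρ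

lemma faceSum_contract_of_mem [AddCommMonoid R] (h : Finset V → R) {m : ℕ} {v : V} {σ : Finset V}
    (hσ : #σ = m + 1) (hv : v ∈ σ) : faceSum m (contract v h) σ = h σ := by
  have card_erase : #(σ.erase v) = m := by rw [Finset.card_erase_of_mem hv, hσ, Nat.add_sub_cancel]
  have herase : σ.erase v ∈ Finset.powersetCard m σ :=
    Finset.mem_powersetCard.2 ⟨Finset.erase_subset v σ, card_erase⟩
  rw [faceSum, Finset.sum_eq_single_of_mem _ herase, contract, if_neg (Finset.notMem_erase v σ),
    Finset.insert_erase hv]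
  intro τ hτ hne
  obtain ⟨hτσ, hτm⟩ := Finset.mem_powersetCard.1 hτ
  rw [contract, if_pos]
  by_contra hvτ
  exact hne (Finset.eq_of_subset_of_card_le (Finset.subset_erase.2 ⟨hτσ, hvτ⟩)
    (card_erase.trans hτm.symm).le)

variable [Ring R] [CharP R 2]

lemma faceSum_faceSum (h : Finset V → R) {m : ℕ} {A : Finset V} (hA : #A = m + 2) :
    faceSum (m + 1) (faceSum m h) A = 0 := by
  have swap : faceSum (m + 1) (faceSum m h) A = ∑ τ ∈ Finset.powersetCard m A,
      ∑ _σ ∈ Finset.powersetCard (m + 1) A with τ ⊆ _σ, h τ := by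
    refine Finset.sum_comm' fun σ τ => ?_
    simp only [Finset.mem_filter, Finset.mem_powersetCard]
    grind
  rw [swap]
  refine Finset.sum_eq_zero fun τ hτ => ?_
  obtain ⟨hτA, hτm⟩ := Finset.mem_powersetCard.1 hτ
  have two_cofaces : #{σ ∈ Finset.powersetCard (m + 1) A | τ ⊆ σ} = 2 := by
    convert Finset.card_filter_powersetCard_subset τ A (m + 1) hτA (by omega)
    rw [hA, hτm, Nat.add_sub_cancel_left, Nat.add_sub_cancel_left, Nat.choose_one_right]
  rw [Finset.sum_const, two_cofaces, two_nsmul, CharTwo.add_self_eq_zero]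

/-- Contraction is a chain homotopy between the identity and zero. -/
lemma add_faceSum_contract (h : Finset V → R) (v : V) {m : ℕ} {σ : Finset V} (hσ : #σ = m + 1) :
    h σ + faceSum m (contract v h) σ = contract v (faceSum (m + 1) h) σ := by
  by_cases hv : v ∈ σ
  · rw [faceSum_contract_of_mem h hσ hv, CharTwo.add_self_eq_zero, contract, if_pos hv]
  · rw [contract, if_neg hv, faceSum_insert h m hv, faceSum_card_self h hσ]

end FaceSum

section Cochains

variable {G : Set (Finset V)} {i : ℕ}

/-- The extension of a cochain by zero to all finite vertex sets. -/
noncomputable def extendZero (f : Cochain G i) (A : Finset V) : ZMod 2 :=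
  if h : IsSimplex G i A then f ⟨A, h⟩ else 0

lemma extendZero_of_isSimplex (f : Cochain G i) {A : Finset V} (hA : IsSimplex G i A) :
    extendZero f A = f ⟨A, hA⟩ :=
  dif_pos hA

lemma coboundary_apply (f : Cochain G i) (σ : {A : Finset V // IsSimplex G (i + 1) A}) :
    coboundary G i f σ = faceSum (i + 1) (extendZero f) σ :=
  rfl

lemma coboundary_restrict_apply (hG : IsRelLowerSet G Finset.Nonempty) (h : Finset V → ZMod 2)
    (σ : {A : Finset V // IsSimplex G (i + 1) A}) :
    coboundary G i (fun τ => h τ) σ = faceSum (i + 1) h σ := by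
  rw [coboundary_apply]
  refine Finset.sum_congr rfl fun τ hτ => ?_
  obtain ⟨hτσ, hτi⟩ := Finset.mem_powersetCard.1 hτ
  have hτG : τ ∈ G := (hG σ.2.1).2 hτσ (Finset.card_pos.1 (hτi ▸ i.succ_pos))
  exact extendZero_of_isSimplex _ ⟨hτG, hτi⟩

lemma coboundary_mem_cocycles (hG : IsRelLowerSet G Finset.Nonempty) (g : Cochain G i) :
    coboundary G i g ∈ cocycles G (i + 1) := by
  refine LinearMap.mem_ker.2 (funext fun A => ?_)
  exact (coboundary_restrict_apply hG (faceSum (i + 1) (extendZero g)) A).trans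
    (faceSum_faceSum (extendZero g) A.2.2)

lemma mem_cochainSupport {f : Cochain G i} {A : Finset V} :
    A ∈ cochainSupport f ↔ ∃ h : IsSimplex G i A, f ⟨A, h⟩ = 1 :=
  Iff.rfl

variable [Fintype V]

/-- The support of a cochain on finitely many vertices, as a `Finset`. -/
noncomputable def suppFinset (f : Cochain G i) : Finset (Finset V) :=
  {A | A ∈ cochainSupport f}

lemma ncard_cochainSupport (f : Cochain G i) : (cochainSupport f).ncard = #(suppFinset f) := by
  rw [← Set.ncard_coe_finset, suppFinset, Finset.coe_filter_univ, Set.ofPred_mem_eq]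

lemma mem_suppFinset {f : Cochain G i} {A : Finset V} :
    A ∈ suppFinset f ↔ extendZero f A = 1 := by
  by_cases hA : IsSimplex G i A <;> simp [suppFinset, mem_cochainSupport, extendZero, hA]

lemma mem_suppFinset_of_isSimplex {f : Cochain G i} {A : Finset V} (hA : IsSimplex G i A) :
    A ∈ suppFinset f ↔ f ⟨A, hA⟩ = 1 := by
  rw [mem_suppFinset, extendZero_of_isSimplex f hA]

lemma isSimplex_of_mem_suppFinset {f : Cochain G i} {A : Finset V} (hA : A ∈ suppFinset f) :
    IsSimplex G i A :=
  (Finset.mem_filter.1 hA).2.choose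

lemma faceSum_extendZero (f : Cochain G i) (A : Finset V) :
    faceSum (i + 1) (extendZero f) A = (#{σ ∈ suppFinset f | σ ⊆ A} : ZMod 2) := by
  have supp_below : {σ ∈ suppFinset f | σ ⊆ A} =
      {σ ∈ Finset.powersetCard (i + 1) A | extendZero f σ = 1} := by
    ext σ
    simp only [Finset.mem_filter, Finset.mem_powersetCard, ← mem_suppFinset]
    exact ⟨fun ⟨hσ, hσA⟩ => ⟨⟨hσA, (isSimplex_of_mem_suppFinset hσ).2⟩, hσ⟩,
      fun ⟨⟨hσA, _⟩, hσ⟩ => ⟨hσ, hσA⟩⟩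
  have eq_ite : ∀ x : ZMod 2, x = if x = 1 then 1 else 0 := by decide
  rw [supp_below, ← Finset.sum_boole]
  exact Finset.sum_congr rfl fun τ _ => eq_ite _

lemma mem_cocycles_iff {f : Cochain G i} :
    f ∈ cocycles G i ↔
      ∀ A, IsSimplex G (i + 1) A → Even #{σ ∈ suppFinset f | σ ⊆ A} := by
  simp only [← ZMod.natCast_eq_zero_iff_even, ← faceSum_extendZero]
  exact ⟨fun h A hA => congrFun (LinearMap.mem_ker.1 h) ⟨A, hA⟩,
    fun h => LinearMap.mem_ker.2 (funext fun A => h A A.2)⟩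

lemma mem_suppFinset_indicator {f : Cochain G i} {s : Set (Finset V)} {A : Finset V} :
    A ∈ suppFinset ((Subtype.val ⁻¹' s).indicator f) ↔ A ∈ suppFinset f ∧ A ∈ s := by
  by_cases hA : IsSimplex G i A <;>
    by_cases hs : A ∈ s <;> simp [suppFinset, mem_cochainSupport, Set.indicator, hA, hs]

lemma indicator_mem_cocycles {f : Cochain G i} (hf : f ∈ cocycles G i) {s : Set (Finset V)}
    (hs : ∀ A, IsSimplex G (i + 1) A →
      (∀ σ ∈ suppFinset f, σ ⊆ A → σ ∈ s) ∨ ∀ σ ∈ suppFinset f, σ ⊆ A → σ ∉ s) :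
    (Subtype.val ⁻¹' s).indicator f ∈ cocycles G i := by
  refine mem_cocycles_iff.2 fun A hA => ?_
  rcases hs A hA with inside | outside
  · convert mem_cocycles_iff.1 hf A hA using 2
    ext σ
    simp only [Finset.mem_filter, mem_suppFinset_indicator]
    exact ⟨fun ⟨⟨hσ, _⟩, hσA⟩ => ⟨hσ, hσA⟩, fun ⟨hσ, hσA⟩ => ⟨⟨hσ, inside σ hσ hσA⟩, hσA⟩⟩
  · rw [Finset.filter_false_of_mem fun σ hσ hσA => outside σ (mem_suppFinset_indicator.1 hσ).1 hσA
      (mem_suppFinset_indicator.1 hσ).2]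
    exact Even.zero

end Cochains

section MinimalCocycles

variable [Fintype V] {G : Set (Finset V)} {j : ℕ}

/-- `f` has the smallest support among the cocycles outside `W`, where `W` stands for the cochains
regarded as trivial. -/
def IsMinimalCocycleOutside (W : Submodule (ZMod 2) (Cochain G j)) (f : Cochain G j) : Prop :=
  MinimalFor (fun g => g ∈ cocycles G j ∧ g ∉ W) (fun g => #(suppFinset g)) f

namespace IsMinimalCocycleOutside

variable {W : Submodule (ZMod 2) (Cochain G j)} {f : Cochain G j}

lemma exists_of_not_le (hW : ¬cocycles G j ≤ W) : ∃ f, IsMinimalCocycleOutside W f :=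
  exists_minimalFor_of_wellFoundedLT _ _ (SetLike.not_le_iff_exists.1 hW)

lemma mem_cocycles (hf : IsMinimalCocycleOutside W f) : f ∈ cocycles G j :=
  hf.prop.1

lemma notMem (hf : IsMinimalCocycleOutside W f) : f ∉ W :=
  hf.prop.2

lemma card_le (hf : IsMinimalCocycleOutside W f) {g : Cochain G j} (hg : g ∈ cocycles G j)
    (hgW : g ∉ W) : #(suppFinset f) ≤ #(suppFinset g) :=
  (le_total _ _).elim id fun hle => hf.le_of_le ⟨hg, hgW⟩ hle

lemma suppFinset_nonempty (hf : IsMinimalCocycleOutside W f) : (suppFinset f).Nonempty := by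
  by_contra hempty
  have eq_zero : ∀ x : ZMod 2, x ≠ 1 → x = 0 := by decide
  refine hf.notMem ((funext fun A => eq_zero _ fun hA => hempty ⟨A, ?_⟩ : f = 0) ▸ W.zero_mem)
  exact (mem_suppFinset_of_isSimplex A.2).2 hA

lemma mem_of_indicator_notMem (hf : IsMinimalCocycleOutside W f) {s : Set (Finset V)}
    (hs : (Subtype.val ⁻¹' s).indicator f ∈ cocycles G j)
    (hsW : (Subtype.val ⁻¹' s).indicator f ∉ W) : ∀ σ ∈ suppFinset f, σ ∈ s := by
  have supp_eq : suppFinset ((Subtype.val ⁻¹' s).indicator f) = suppFinset f :=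
    Finset.eq_of_subset_of_card_le (fun A hA => (mem_suppFinset_indicator.1 hA).1)
      (hf.card_le hs hsW)
  exact fun σ hσ => (mem_suppFinset_indicator.1 (supp_eq.symm ▸ hσ)).2

end IsMinimalCocycleOutside

/-- The set `S` is connected by the hyperedges `e K`, `K ∈ 𝒢`: no nonempty proper subset of `S` is
closed under passing from one element to another one in a common hyperedge. -/
def ConnectedVia {α β : Type*} (e : β → Finset α) (𝒢 : Set β) (S : Finset α) : Prop :=
  ∀ F ⊆ S, F.Nonempty →
    (∀ K ∈ 𝒢, ∀ σ ∈ F, σ ∈ e K → ∀ τ ∈ S, τ ∈ e K → τ ∈ F) → F = S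

lemma IsMinimalCocycleOutside.connectedVia {W : Submodule (ZMod 2) (Cochain G j)} {f : Cochain G j}
    (hf : IsMinimalCocycleOutside W f) {𝒢 : Set (Finset V)}
    (hcover : ∀ A, IsSimplex G (j + 1) A → ∃ K ∈ 𝒢, A ⊆ K) :
    ConnectedVia (Finset.powersetCard (j + 1)) 𝒢 (suppFinset f) := by
  intro F hF hFne hclosed
  have inside_or_outside : ∀ A, IsSimplex G (j + 1) A →
      (∀ σ ∈ suppFinset f, σ ⊆ A → σ ∈ F) ∨ ∀ σ ∈ suppFinset f, σ ⊆ A → σ ∉ F := by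
    intro A hA
    obtain ⟨K, hK, hAK⟩ := hcover A hA
    have mem_face : ∀ σ ∈ suppFinset f, σ ⊆ A → σ ∈ Finset.powersetCard (j + 1) K :=
      fun σ hσ hσA =>
        Finset.mem_powersetCard.2 ⟨hσA.trans hAK, (isSimplex_of_mem_suppFinset hσ).2⟩
    by_contra! hmixed
    obtain ⟨⟨τ, hτ, hτA, hτF⟩, σ, hσ, hσA, hσF⟩ := hmixed
    exact hτF (hclosed K hK σ hσF (mem_face σ hσ hσA) τ hτ (mem_face τ hτ hτA))
  have cocycle := indicator_mem_cocycles hf.mem_cocycles inside_or_outside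
  have cocycle_compl := indicator_mem_cocycles (s := (F : Set (Finset V))ᶜ) hf.mem_cocycles
    fun A hA => (inside_or_outside A hA).symm.imp id fun h σ hσ hσA => not_not_intro (h σ hσ hσA)
  by_cases hW : (Subtype.val ⁻¹' (F : Set (Finset V))).indicator f ∈ W
  · have compl_notMem : (Subtype.val ⁻¹' (F : Set (Finset V))ᶜ).indicator f ∉ W := fun hmem =>
      hf.notMem (Set.indicator_self_add_compl _ f ▸ W.add_mem hW hmem)
    obtain ⟨σ, hσ⟩ := hFne
    exact absurd hσ (hf.mem_of_indicator_notMem cocycle_compl compl_notMem σ (hF hσ))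
  · exact hF.antisymm (hf.mem_of_indicator_notMem cocycle hW)

end MinimalCocycles

section Expansion

variable [Fintype V]

/-- The `(j+2)`-sets containing an odd number of members of `F`; for a family `F` of `j`-simplices
this is the support of the coboundary of `F` in the complete complex. -/
noncomputable def oddSets (j : ℕ) (F : Finset (Finset V)) : Finset (Finset V) :=
  {A ∈ Finset.powersetCard (j + 2) Finset.univ | Odd #{σ ∈ F | σ ⊆ A}}

/-- The `(k+1)`-sets containing a member of `oddSets j F`: none of them can be a simplex of a
complex in which `F` is the support of a cocycle. -/
noncomputable def blockingSets (k j : ℕ) (F : Finset (Finset V)) : Finset (Finset V) :=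
  {K ∈ Finset.powersetCard (k + 1) Finset.univ | ∃ A ∈ oddSets j F, A ⊆ K}

lemma mem_oddSets {j : ℕ} {F : Finset (Finset V)} {A : Finset V} :
    A ∈ oddSets j F ↔ #A = j + 2 ∧ Odd #{σ ∈ F | σ ⊆ A} := by
  simp [oddSets]

lemma mem_blockingSets {k j : ℕ} {F : Finset (Finset V)} {K : Finset V} :
    K ∈ blockingSets k j F ↔ #K = k + 1 ∧ ∃ A ∈ oddSets j F, A ⊆ K := by
  simp [blockingSets]

lemma notMem_of_mem_blockingSets {G : Set (Finset V)} (hG : IsRelLowerSet G Finset.Nonempty)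
    {k j : ℕ} {f : Cochain G j} (hf : f ∈ cocycles G j) {K : Finset V}
    (hK : K ∈ blockingSets k j (suppFinset f)) : K ∉ G := by
  obtain ⟨-, A, hA, hAK⟩ := mem_blockingSets.1 hK
  obtain ⟨hAcard, hodd⟩ := mem_oddSets.1 hA
  intro hKG
  have hAG : A ∈ G := (hG hKG).2 hAK (Finset.card_pos.1 (by omega))
  exact Nat.not_even_iff_odd.2 hodd (mem_cocycles_iff.1 hf A ⟨hAG, hAcard⟩)

lemma insert_mem_oddSets_of_mem_suppFinset {G : Set (Finset V)}
    (hG : IsRelLowerSet G Finset.Nonempty) {i : ℕ} (f : Cochain G (i + 1)) (v : V) {σ : Finset V}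
    (hσ : σ ∈ suppFinset (f + coboundary G i fun τ => contract v (extendZero f) τ)) :
    v ∉ σ ∧ insert v σ ∈ oddSets (i + 1) (suppFinset f) := by
  have hσG := isSimplex_of_mem_suppFinset hσ
  rw [mem_suppFinset_of_isSimplex hσG, Pi.add_apply, coboundary_restrict_apply hG,
    ← extendZero_of_isSimplex f hσG, add_faceSum_contract _ _ hσG.2, contract,
    faceSum_extendZero] at hσ
  have hv : v ∉ σ := fun hmem => zero_ne_one ((if_pos hmem).symm.trans hσ)
  rw [if_neg hv, ZMod.natCast_eq_one_iff_odd] at hσ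
  exact ⟨hv, mem_oddSets.2 ⟨by rw [Finset.card_insert_of_notMem hv, hσG.2], hσ⟩⟩

lemma IsMinimalCocycleOutside.card_suppFinset_le_card_oddSets_filter_mem {G : Set (Finset V)}
    (hG : IsRelLowerSet G Finset.Nonempty) {i : ℕ} {W : Submodule (ZMod 2) (Cochain G (i + 1))}
    (hW : coboundaries G (i + 1) ≤ W) {f : Cochain G (i + 1)} (hf : IsMinimalCocycleOutside W f)
    (v : V) : #(suppFinset f) ≤ #{A ∈ oddSets (i + 1) (suppFinset f) | v ∈ A} := by
  set b := coboundary G i fun τ => contract v (extendZero f) τ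
  have cocycle : f + b ∈ cocycles G (i + 1) :=
    add_mem hf.mem_cocycles (coboundary_mem_cocycles hG _)
  have hbW : b ∈ W := hW ⟨_, rfl⟩
  have outside : f + b ∉ W := fun hmem => hf.notMem ((W.add_mem_iff_left hbW).1 hmem)
  refine (hf.card_le cocycle outside).trans (Finset.card_le_card_of_injOn (insert v) ?_ ?_)
  · intro σ hσ
    exact Finset.mem_filter.2 ⟨(insert_mem_oddSets_of_mem_suppFinset hG f v hσ).2,
      Finset.mem_insert_self v σ⟩
  · intro σ hσ σ' hσ' heq
    rw [← Finset.erase_insert (insert_mem_oddSets_of_mem_suppFinset hG f v hσ).1, heq,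
      Finset.erase_insert (insert_mem_oddSets_of_mem_suppFinset hG f v hσ').1]

lemma IsMinimalCocycleOutside.card_mul_card_suppFinset_le {G : Set (Finset V)}
    (hG : IsRelLowerSet G Finset.Nonempty) {j : ℕ} (hj : 1 ≤ j)
    {W : Submodule (ZMod 2) (Cochain G j)} (hW : coboundaries G j ≤ W) {f : Cochain G j}
    (hf : IsMinimalCocycleOutside W f) :
    Fintype.card V * #(suppFinset f) ≤ #(oddSets j (suppFinset f)) * (j + 2) := by
  obtain ⟨i, rfl⟩ := Nat.exists_eq_succ_of_ne_zero (Nat.one_le_iff_ne_zero.1 hj)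
  rw [← Finset.card_univ]
  refine Finset.card_mul_le_card_mul (fun v A => v ∈ A)
    (fun v _ => hf.card_suppFinset_le_card_oddSets_filter_mem hG hW v) fun A hA => ?_
  rw [← (mem_oddSets.1 hA).1]
  exact Finset.card_le_card fun v hv => (Finset.mem_bipartiteBelow _).1 hv |>.2

lemma card_oddSets_mul_choose_le {k j : ℕ} (hjk : j < k) (F : Finset (Finset V)) :
    #(oddSets j F) * (Fintype.card V - (j + 2)).choose (k - j - 1) ≤
      #(blockingSets k j F) * (k + 1).choose (j + 2) := by
  refine Finset.card_mul_le_card_mul (fun A K => A ⊆ K) (fun A hA => ?_) fun K hK => ?_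
  · have hAcard := (mem_oddSets.1 hA).1
    have supersets : #{K ∈ Finset.powersetCard (k + 1) Finset.univ | A ⊆ K} =
        (Fintype.card V - (j + 2)).choose (k - j - 1) := by
      convert Finset.card_filter_powersetCard_subset A Finset.univ (k + 1) (Finset.subset_univ A)
        (by omega) using 2
      · rw [hAcard, Finset.card_univ]
      · omega
    rw [← supersets]
    refine Finset.card_le_card fun K hK => ?_
    obtain ⟨hKcard, hAK⟩ := Finset.mem_filter.1 hK
    refine (Finset.mem_bipartiteAbove _).2 ⟨mem_blockingSets.2 ⟨?_, A, hA, hAK⟩, hAK⟩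
    exact (Finset.mem_powersetCard.1 hKcard).2
  · rw [← (mem_blockingSets.1 hK).1, ← Finset.card_powersetCard]
    refine Finset.card_le_card fun A hA => ?_
    obtain ⟨hAodd, hAK⟩ := (Finset.mem_bipartiteBelow _).1 hA
    exact Finset.mem_powersetCard.2 ⟨hAK, (mem_oddSets.1 hAodd).1⟩

lemma half_pow_div_factorial_le_choose {n a m : ℕ} (h : 2 * (a + m) ≤ n + 2) :
    ((n : ℝ) / 2) ^ m / m.factorial ≤ ((n - a).choose m : ℝ) := by
  have half_le : (n : ℝ) / 2 ≤ ((n - a + 1 - m : ℕ) : ℝ) := by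
    rw [div_le_iff₀ two_pos]
    exact_mod_cast (by omega : n ≤ (n - a + 1 - m) * 2)
  calc ((n : ℝ) / 2) ^ m / m.factorial
      ≤ ((n - a + 1 - m : ℕ) : ℝ) ^ m / m.factorial := by gcongr
    _ ≤ ((n - a).choose m : ℝ) := Nat.pow_le_choose m (n - a)

lemma exists_mul_card_le_card_blockingSets {k j : ℕ} (hjk : j < k) :
    ∃ c : ℝ, 0 < c ∧ ∀ n, 2 * k ≤ n → ∀ F : Finset (Finset (Fin n)),
      n * #F ≤ #(oddSets j F) * (j + 2) →
        c * #F * (n : ℝ) ^ (k - j) ≤ #(blockingSets k j F) := by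
  obtain ⟨m, rfl⟩ : ∃ m, k = j + 1 + m := Nat.exists_eq_add_of_le hjk
  have choose_pos : (0 : ℝ) < ((j + 1 + m + 1).choose (j + 2) : ℝ) :=
    Nat.cast_pos.2 (Nat.choose_pos (by omega))
  set C : ℝ := ((j + 1 + m + 1).choose (j + 2) : ℝ) with hC
  refine ⟨((j + 2) * C * (2 ^ m * m.factorial))⁻¹, by positivity, fun n hn F hF => ?_⟩
  have odd_le : #(oddSets j F) * ((n : ℝ) ^ m / (2 ^ m * m.factorial)) ≤
      #(blockingSets (j + 1 + m) j F) * C := by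
    calc #(oddSets j F) * ((n : ℝ) ^ m / (2 ^ m * m.factorial))
        ≤ #(oddSets j F) * ((n - (j + 2)).choose m : ℝ) := by
          rw [← div_div, ← div_pow]
          gcongr
          exact half_pow_div_factorial_le_choose (by omega)
      _ ≤ #(blockingSets (j + 1 + m) j F) * C := by
          have h := card_oddSets_mul_choose_le hjk F
          rw [Fintype.card_fin, show j + 1 + m - j - 1 = m by omega] at h
          rw [hC]
          exact_mod_cast h
  have expansion : (n : ℝ) * #F ≤ #(oddSets j F) * (j + 2) := by exact_mod_cast hF
  rw [show j + 1 + m - j = m + 1 by omega, mul_assoc, inv_mul_le_iff₀ (by positivity)]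
  calc #F * (n : ℝ) ^ (m + 1)
      = n * #F * (n : ℝ) ^ m := by ring
    _ ≤ #(oddSets j F) * (j + 2) * (n : ℝ) ^ m := by gcongr
    _ = (j + 2) * (2 ^ m * m.factorial) *
          (#(oddSets j F) * ((n : ℝ) ^ m / (2 ^ m * m.factorial))) := by field_simp
    _ ≤ (j + 2) * (2 ^ m * m.factorial) * (#(blockingSets (j + 1 + m) j F) * C) := by gcongr
    _ = (j + 2) * C * (2 ^ m * m.factorial) * #(blockingSets (j + 1 + m) j F) := by ring

end Expansion

section Exploration

variable {α β : Type*}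

/-- A state of a search through the hypergraph with hyperedges `e K`: the vertices whose hyperedges
have been exhausted, the vertices reached so far, and the indices of the hyperedges used. -/
structure ExplorationState (α β : Type*) where
  processed : Finset α
  found : Finset α
  used : Finset β

namespace ExplorationState

variable (x : ExplorationState α β)

/-- The state after declaring `a` exhausted. -/
noncomputable def process (a : α) : ExplorationState α β :=
  { x with processed := insert a x.processed }

/-- The state after reaching the vertices `A` through the hyperedge `K`. -/
noncomputable def reach (A : Finset α) (K : β) : ExplorationState α β :=
  { x with found := x.found ∪ A, used := insert K x.used }

end ExplorationState

/-- The pairs of a vertex set and a set of hyperedges that a search through `e K`, `K ∈ H`, can end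
with after `l` steps from `x`. A step selects a vertex that is found but not processed and either
declares it processed or uses a fresh hyperedge at it, guessing which vertices of that hyperedge
to keep. -/
noncomputable def explore (H : Finset β) (e : β → Finset α) :
    ℕ → ExplorationState α β → Set (Finset α × Finset β)
  | 0, x => {(x.found, x.used)}
  | l + 1, x =>
    if h : ∃ a ∈ x.found, a ∉ x.processed then
      explore H e l (x.process h.choose) ∪
        ⋃ K ∈ {K ∈ H | h.choose ∈ e K ∧ K ∉ x.used}, ⋃ A ∈ (e K).powerset,
          explore H e l (x.reach A K)
    else {(x.found, x.used)}

variable {H : Finset β} {e : β → Finset α}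

lemma tsum_finset_biUnion_le {ι γ : Type*} (f : γ → ℝ≥0∞) (s : Finset ι) (t : ι → Set γ)
    {M : ℝ≥0∞} (hM : ∀ i ∈ s, ∑' y : t i, f y ≤ M) : ∑' y : ⋃ i ∈ s, t i, f y ≤ #s * M :=
  (ENNReal.tsum_biUnion_le f s t).trans ((Finset.sum_le_card_nsmul s _ M hM).trans_eq
    (nsmul_eq_mul _ _))

lemma tsum_explore_le {N r : ℕ} (hN : ∀ a, #{K ∈ H | a ∈ e K} ≤ N)
    (hr : ∀ K ∈ H, #(e K) ≤ r) (q : ℝ≥0∞) (l : ℕ) (x : ExplorationState α β) :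
    ∑' y : explore H e l x, q ^ #y.1.2 ≤ q ^ #x.used * (1 + N * 2 ^ r * q) ^ l := by
  set c := 1 + N * 2 ^ r * q with hc
  let weight : Finset α × Finset β → ℝ≥0∞ := fun y => q ^ #y.2
  suffices ∑' y : explore H e l x, weight y ≤ q ^ #x.used * c ^ l from this
  induction l generalizing x with
  | zero => simp [explore, weight]
  | succ l ih =>
    by_cases h : ∃ a ∈ x.found, a ∉ x.processed
    · rw [explore, dif_pos h]
      set a := h.choose
      set fresh : Finset β := {K ∈ H | a ∈ e K ∧ K ∉ x.used}
      have hyperedge_le : ∀ K ∈ fresh, ∑' y : ⋃ A ∈ (e K).powerset, explore H e l (x.reach A K),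
          weight y ≤ 2 ^ r * (q ^ (#x.used + 1) * c ^ l) := by
        intro K hK
        have card_used (A : Finset α) : #(x.reach A K).used = #x.used + 1 :=
          Finset.card_insert_of_notMem (Finset.mem_filter.1 hK).2.2
        refine (tsum_finset_biUnion_le weight _ _
          fun A _ => card_used A ▸ ih (x.reach A K)).trans ?_
        gcongr
        rw [Finset.card_powerset]
        exact_mod_cast Nat.pow_le_pow_right two_pos (hr K (Finset.mem_filter.1 hK).1)
      have degree_le : #fresh ≤ N :=
        (Finset.card_le_card (Finset.monotone_filter_right H fun _ _ h => h.1)).trans (hN a)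
      calc _ ≤ q ^ #x.used * c ^ l + N * (2 ^ r * (q ^ (#x.used + 1) * c ^ l)) := by
            refine (ENNReal.tsum_union_le weight _ _).trans (add_le_add (ih (x.process a)) ?_)
            refine (tsum_finset_biUnion_le weight _ _ hyperedge_le).trans ?_
            gcongr
        _ = q ^ #x.used * c ^ (l + 1) := by
            rw [pow_succ c, pow_succ q, hc]
            ring
    · rw [explore, dif_neg h, tsum_singleton (x.found, x.used) weight]
      exact le_mul_of_one_le_right' (one_le_pow₀ (hc ▸ le_self_add))

/-- The properties of a state of the search that follows the hyperedges in `𝒢` and keeps exactly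
the vertices of `S`. -/
structure IsAdmissible (e : β → Finset α) (𝒢 : Set β) (S : Finset α) (x : ExplorationState α β) :
    Prop where
  processed_subset : x.processed ⊆ x.found
  found_subset : x.found ⊆ S
  found_nonempty : x.found.Nonempty
  used_subset : ↑x.used ⊆ 𝒢
  used_saturated : ∀ K ∈ x.used, ∀ τ ∈ S, τ ∈ e K → τ ∈ x.found
  processed_saturated : ∀ K ∈ 𝒢, ∀ σ ∈ x.processed, σ ∈ e K → ∀ τ ∈ S, τ ∈ e K → τ ∈ x.found

namespace IsAdmissible

variable {𝒢 : Set β} {S : Finset α} {x : ExplorationState α β}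

lemma process (hx : IsAdmissible e 𝒢 S x) {a : α} (ha : a ∈ x.found)
    (hsat : ∀ K ∈ 𝒢, a ∈ e K → ∀ τ ∈ S, τ ∈ e K → τ ∈ x.found) :
    IsAdmissible e 𝒢 S (x.process a) where
  processed_subset := Finset.insert_subset ha hx.processed_subset
  found_subset := hx.found_subset
  found_nonempty := hx.found_nonempty
  used_subset := hx.used_subset
  used_saturated := hx.used_saturated
  processed_saturated K hK σ hσ := (Finset.mem_insert.1 hσ).elim
    (fun hσa => hσa ▸ hsat K hK) (hx.processed_saturated K hK σ)

lemma reach (hx : IsAdmissible e 𝒢 S x) {K : β} (hK : K ∈ 𝒢) :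
    IsAdmissible e 𝒢 S (x.reach {τ ∈ S | τ ∈ e K} K) where
  processed_subset := hx.processed_subset.trans Finset.subset_union_left
  found_subset := Finset.union_subset hx.found_subset (Finset.filter_subset _ _)
  found_nonempty := hx.found_nonempty.mono Finset.subset_union_left
  used_subset := by
    simpa only [ExplorationState.reach, Finset.coe_insert] using
      Set.insert_subset hK hx.used_subset
  used_saturated L hL τ hτ hτL := (Finset.mem_insert.1 hL).elim
    (fun hLK => Finset.mem_union_right _ (Finset.mem_filter.2 ⟨hτ, hLK ▸ hτL⟩))
    (fun hL => Finset.mem_union_left _ (hx.used_saturated L hL τ hτ hτL))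
  processed_saturated L hL σ hσ hσL τ hτ hτL :=
    Finset.mem_union_left _ (hx.processed_saturated L hL σ hσ hσL τ hτ hτL)

lemma found_eq_of_forall_processed (hx : IsAdmissible e 𝒢 S x) (hS : ConnectedVia e 𝒢 S)
    (h : x.found ⊆ x.processed) : x.found = S :=
  hS x.found hx.found_subset hx.found_nonempty fun K hK σ hσ =>
    hx.processed_saturated K hK σ (h hσ)

lemma exists_mem_explore (hS : ConnectedVia e 𝒢 S) (h𝒢 : 𝒢 ⊆ H) {l : ℕ}
    (hx : IsAdmissible e 𝒢 S x) (hl : 2 * #S ≤ l + #x.processed + #x.found) :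
    ∃ 𝒦 : Finset β, ↑𝒦 ⊆ 𝒢 ∧ (S, 𝒦) ∈ explore H e l x := by
  induction l generalizing x with
  | zero =>
    have found_eq : x.found = S := by
      have := Finset.card_le_card hx.processed_subset
      exact Finset.eq_of_subset_of_card_le hx.found_subset (by omega)
    exact ⟨x.used, hx.used_subset, by rw [explore, found_eq, Set.mem_singleton_iff]⟩
  | succ l ih =>
    rw [explore]
    split_ifs with h
    · set a := h.choose
      obtain ⟨ha, ha'⟩ := h.choose_spec
      by_cases hsat : ∀ K ∈ 𝒢, a ∈ e K → ∀ τ ∈ S, τ ∈ e K → τ ∈ x.found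
      · have card_processed : #(x.process a).processed = #x.processed + 1 :=
          Finset.card_insert_of_notMem ha'
        obtain ⟨𝒦, h𝒦, hmem⟩ := ih (hx.process ha hsat)
          (by rw [card_processed]; simp only [ExplorationState.process]; omega)
        exact ⟨𝒦, h𝒦, Or.inl hmem⟩
      · push Not at hsat
        obtain ⟨K, hK, haK, τ, hτS, hτK, hτ⟩ := hsat
        have card_found : #x.found < #(x.reach {τ ∈ S | τ ∈ e K} K).found :=
          Finset.card_lt_card ⟨Finset.subset_union_left, fun hsub =>
            hτ (hsub (Finset.mem_union_right _ (Finset.mem_filter.2 ⟨hτS, hτK⟩)))⟩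
        obtain ⟨𝒦, h𝒦, hmem⟩ := ih (hx.reach hK)
          (by simp only [ExplorationState.reach] at card_found ⊢; omega)
        have fresh : K ∉ x.used := fun hKu => hτ (hx.used_saturated K hKu τ hτS hτK)
        refine ⟨𝒦, h𝒦, Or.inr (Set.mem_biUnion (Finset.mem_filter.2 ⟨h𝒢 hK, haK, fresh⟩)
          (Set.mem_biUnion (Finset.mem_powerset.2 fun ρ hρ => ?_) hmem))⟩
        exact (Finset.mem_filter.1 hρ).2
    · have found_subset : x.found ⊆ x.processed := by
        push Not at h
        exact h
      refine ⟨x.used, hx.used_subset, ?_⟩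
      rw [hx.found_eq_of_forall_processed hS found_subset, Set.mem_singleton_iff]

end IsAdmissible

lemma exists_mem_explore_of_connectedVia {𝒢 : Set β} {S : Finset α} (hS : ConnectedVia e 𝒢 S)
    (h𝒢 : 𝒢 ⊆ H) {σ : α} (hσ : σ ∈ S) :
    ∃ 𝒦 : Finset β, ↑𝒦 ⊆ 𝒢 ∧ (S, 𝒦) ∈ explore H e (2 * #S) ⟨∅, {σ}, ∅⟩ := by
  refine IsAdmissible.exists_mem_explore hS h𝒢 ?_ (by omega)
  constructor <;> simp [hσ]

end Exploration

section BirthTimes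

lemma measure_pi_forall_mem_and_forall_mem {ι X : Type*} [Fintype ι] [MeasurableSpace X]
    (μ : Measure X) [IsProbabilityMeasure μ] {A B : Finset ι} (hAB : Disjoint A B) (s t : Set X) :
    Measure.pi (fun _ : ι => μ) {x | (∀ i ∈ A, x i ∈ s) ∧ ∀ i ∈ B, x i ∈ t} =
      μ s ^ #A * μ t ^ #B := by
  have notMem_right : ∀ i ∈ A, i ∉ B := fun i hA hB => Finset.disjoint_left.1 hAB hA hB
  have box : {x : ι → X | (∀ i ∈ A, x i ∈ s) ∧ ∀ i ∈ B, x i ∈ t} =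
      Set.univ.pi fun i => if i ∈ A then s else if i ∈ B then t else Set.univ := by
    ext x
    simp only [Set.mem_ofPred_eq, Set.mem_univ_pi, ← forall_and]
    refine forall_congr' fun i => ?_
    by_cases hA : i ∈ A
    · simp [hA, notMem_right i hA]
    · by_cases hB : i ∈ B <;> simp [hA, hB]
  have factor : ∀ i, μ (if i ∈ A then s else if i ∈ B then t else Set.univ) =
      (if i ∈ A then μ s else 1) * if i ∈ B then μ t else 1 := by
    intro i
    by_cases hA : i ∈ A
    · simp [hA, notMem_right i hA]
    · by_cases hB : i ∈ B <;> simp [hA, hB]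
  simp only [box, Measure.pi_pi, factor, Finset.prod_mul_distrib, Finset.prod_ite_mem,
    Finset.univ_inter, Finset.prod_const]

instance isProbabilityMeasure_uniform :
    IsProbabilityMeasure (volume.restrict (Set.Icc (0 : ℝ) 1)) :=
  ⟨by simp⟩

lemma uniform_Iic_le (u : ℝ) : volume.restrict (Set.Icc (0 : ℝ) 1) (Set.Iic u) ≤ .ofReal u := by
  rw [Measure.restrict_apply measurableSet_Iic]
  calc volume (Set.Iic u ∩ Set.Icc 0 1)
      ≤ volume (Set.Icc 0 u) := measure_mono fun x hx => ⟨hx.2.1, hx.1⟩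
    _ = .ofReal u := by rw [Real.volume_Icc, sub_zero]

lemma uniform_Ioi_le (w : ℝ) :
    volume.restrict (Set.Icc (0 : ℝ) 1) (Set.Ioi w) ≤ .ofReal (Real.exp (-w)) := by
  rw [Measure.restrict_apply measurableSet_Ioi]
  calc volume (Set.Ioi w ∩ Set.Icc 0 1)
      ≤ volume (Set.Ioc w 1) := measure_mono fun x hx => ⟨hx.1, hx.2.2⟩
    _ = .ofReal (1 - w) := Real.volume_Ioc
    _ ≤ .ofReal (Real.exp (-w)) := ENNReal.ofReal_le_ofReal (Real.one_sub_le_exp_neg w)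

instance isProbabilityMeasure_birthMeasure (n : ℕ) : IsProbabilityMeasure (birthMeasure n) :=
  inferInstanceAs (IsProbabilityMeasure (Measure.pi _))

lemma birthMeasure_born_and_unborn_le {n : ℕ} (A B : Finset (Finset (Fin n))) {w u M : ℝ}
    (hw : 0 ≤ w) (hM : M ≤ #B) :
    birthMeasure n {t | ∃ p ∈ Set.Icc w u, (∀ K ∈ A, t K ≤ p) ∧ ∀ K ∈ B, p < t K} ≤
      .ofReal u ^ #A * .ofReal (Real.exp (-(w * M))) := by
  by_cases hAB : Disjoint A B
  · calc birthMeasure n {t | ∃ p ∈ Set.Icc w u, (∀ K ∈ A, t K ≤ p) ∧ ∀ K ∈ B, p < t K}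
      _ ≤ birthMeasure n {t | (∀ K ∈ A, t K ∈ Set.Iic u) ∧ ∀ K ∈ B, t K ∈ Set.Ioi w} :=
          measure_mono fun t ⟨p, hp, born, unborn⟩ =>
            ⟨fun K hK => (born K hK).trans hp.2, fun K hK => hp.1.trans_lt (unborn K hK)⟩
      _ ≤ .ofReal u ^ #A * .ofReal (Real.exp (-w)) ^ #B := by
          rw [birthMeasure, measure_pi_forall_mem_and_forall_mem _ hAB]
          gcongr
          exacts [uniform_Iic_le u, uniform_Ioi_le w]
      _ ≤ .ofReal u ^ #A * .ofReal (Real.exp (-(w * M))) := by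
          rw [← ENNReal.ofReal_pow (Real.exp_nonneg _), ← Real.exp_nat_mul]
          gcongr
          linarith [mul_le_mul_of_nonneg_left hM hw]
  · obtain ⟨K, hKA, hKB⟩ := Finset.not_disjoint_iff.1 hAB
    have empty : {t : Finset (Fin n) → ℝ |
        ∃ p ∈ Set.Icc w u, (∀ K ∈ A, t K ≤ p) ∧ ∀ K ∈ B, p < t K} = ∅ :=
      Set.eq_empty_of_forall_notMem fun t ⟨_, _, born, unborn⟩ =>
        (born K hKA).not_gt (unborn K hKB)
    rw [empty, measure_empty]
    exact zero_le

variable {k j : ℕ}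

lemma card_filter_mem_powersetCard_le [Fintype V] (hjk : j ≤ k) (σ : Finset V) :
    #{K ∈ Finset.powersetCard (k + 1) (Finset.univ : Finset V) |
      σ ∈ Finset.powersetCard (j + 1) K} ≤ Fintype.card V ^ (k - j) := by
  by_cases hσ : #σ = j + 1
  · calc _ = #{K ∈ Finset.powersetCard (k + 1) (Finset.univ : Finset V) | σ ⊆ K} := by
          simp only [Finset.mem_powersetCard, hσ, and_true]
      _ = (Fintype.card V - (j + 1)).choose (k - j) := by
          convert Finset.card_filter_powersetCard_subset σ Finset.univ (k + 1)
            (Finset.subset_univ σ) (by omega) using 2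
          · rw [hσ, Finset.card_univ]
          · omega
      _ ≤ (Fintype.card V - (j + 1)) ^ (k - j) := Nat.choose_le_pow _ _
      _ ≤ Fintype.card V ^ (k - j) := Nat.pow_le_pow_left (Nat.sub_le _ _) _
  · simp [Finset.mem_powersetCard, hσ]

lemma tsum_explore_powersetCard_le [Fintype V] (hjk : j ≤ k) (q : ℝ≥0∞) (l : ℕ) (σ : Finset V) :
    ∑' x : explore (Finset.powersetCard (k + 1) (Finset.univ : Finset V))
      (Finset.powersetCard (j + 1)) l ⟨∅, {σ}, ∅⟩, q ^ #x.1.2 ≤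
      (1 + (Fintype.card V ^ (k - j) : ℕ) * 2 ^ (k + 1).choose (j + 1) * q) ^ l := by
  have h := tsum_explore_le (H := Finset.powersetCard (k + 1) (Finset.univ : Finset V))
    (fun a => by convert card_filter_mem_powersetCard_le hjk a)
    (fun K hK => by rw [Finset.card_powersetCard, (Finset.mem_powersetCard.1 hK).2]) q l ⟨∅, {σ}, ∅⟩
  rwa [Finset.card_empty, pow_zero, one_mul] at h

/-- The event that, at some time `p` between `w` and `u`, a search of length `l` from `σ` through
the `k`-simplices born by `p` can reach a family with at least `M` blocking sets, all unborn. -/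
def obstructionEvent (k j n l : ℕ) (M w u : ℝ) (σ : Finset (Fin n)) : Set (Finset (Fin n) → ℝ) :=
  {t | ∃ x ∈ explore (Finset.powersetCard (k + 1) Finset.univ) (Finset.powersetCard (j + 1)) l
      ⟨∅, {σ}, ∅⟩, M ≤ #(blockingSets k j x.1) ∧
        ∃ p ∈ Set.Icc w u, (∀ K ∈ x.2, t K ≤ p) ∧ ∀ K ∈ blockingSets k j x.1, p < t K}

lemma birthMeasure_obstructionEvent_le (hjk : j ≤ k) {n l : ℕ} {M w u : ℝ} (hw : 0 ≤ w)
    (σ : Finset (Fin n)) :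
    birthMeasure n (obstructionEvent k j n l M w u σ) ≤
      (1 + (n ^ (k - j) : ℕ) * 2 ^ (k + 1).choose (j + 1) * .ofReal u) ^ l *
        .ofReal (Real.exp (-(w * M))) := by
  set outcomes := explore (Finset.powersetCard (k + 1) (Finset.univ : Finset (Fin n)))
    (Finset.powersetCard (j + 1)) l ⟨∅, {σ}, ∅⟩
  let event (x : Finset (Finset (Fin n)) × Finset (Finset (Fin n))) :=
    {t : Finset (Fin n) → ℝ | M ≤ #(blockingSets k j x.1) ∧
      ∃ p ∈ Set.Icc w u, (∀ K ∈ x.2, t K ≤ p) ∧ ∀ K ∈ blockingSets k j x.1, p < t K}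
  have event_le (x) : birthMeasure n (event x) ≤
      .ofReal u ^ #x.2 * .ofReal (Real.exp (-(w * M))) := by
    by_cases hM : M ≤ #(blockingSets k j x.1)
    · simpa only [event, hM, true_and] using
        birthMeasure_born_and_unborn_le x.2 (blockingSets k j x.1) hw hM
    · simp [event, hM]
  calc birthMeasure n (obstructionEvent k j n l M w u σ)
      ≤ birthMeasure n (⋃ x ∈ outcomes, event x) :=
        measure_mono fun t ⟨x, hx, ht⟩ => Set.mem_biUnion hx ht
    _ ≤ ∑' x : outcomes, birthMeasure n (event x) :=
        measure_biUnion_le _ outcomes.to_countable event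
    _ ≤ ∑' x : outcomes, .ofReal u ^ #x.1.2 * .ofReal (Real.exp (-(w * M))) :=
        ENNReal.tsum_le_tsum fun x => event_le x
    _ = (∑' x : outcomes, .ofReal u ^ #x.1.2) * .ofReal (Real.exp (-(w * M))) :=
        ENNReal.tsum_mul_right
    _ ≤ _ := by
        gcongr
        simpa only [Fintype.card_fin] using tsum_explore_powersetCard_le hjk (.ofReal u) l σ

end BirthTimes

section ShortCocycles

/-- Every submodule of cochains that contains the coboundaries either contains all cocycles or
misses one whose support has fewer than `d` elements. -/
def HasShortCocycles (G : Set (Finset V)) (j d : ℕ) : Prop :=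
  ∀ W : Submodule (ZMod 2) (Cochain G j), coboundaries G j ≤ W →
    cocycles G j ≤ W ∨ ∃ f ∈ cocycles G j, f ∉ W ∧ (cochainSupport f).ncard < d

/-- The submodule of cochains generated by copies of `M_j^-`. -/
def generatedSubmodule [DecidableEq V] (G : Set (Finset V)) (k j : ℕ) :
    Submodule (ZMod 2) (Cochain G j) where
  carrier := {f | GeneratedByMjMinus G k j f}
  zero_mem' := ⟨0, Fin.elim0, fun i => i.elim0, by simp⟩
  add_mem' := by
    rintro f g ⟨m, fs, hfs, hf⟩ ⟨m', gs, hgs, hg⟩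
    refine ⟨m + m', Fin.append fs gs, fun i => ?_, ?_⟩
    · refine Fin.addCases (fun i => ?_) (fun i => ?_) i
      · simpa only [Fin.append_left] using hfs i
      · simpa only [Fin.append_right] using hgs i
    · simpa only [Fin.sum_univ_add, Fin.append_left, Fin.append_right, add_sub_add_comm] using
        add_mem hf hg
  smul_mem' := by
    rintro a f ⟨m, fs, hfs, hf⟩
    obtain rfl | rfl : a = 0 ∨ a = 1 := by decide +revert
    · exact ⟨0, Fin.elim0, fun i => i.elim0, by simp⟩
    · exact ⟨m, fs, hfs, by simpa only [one_smul] using hf⟩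

lemma coboundaries_le_generatedSubmodule [DecidableEq V] (G : Set (Finset V)) (k j : ℕ) :
    coboundaries G j ≤ generatedSubmodule G k j :=
  fun f hf => ⟨0, Fin.elim0, fun i => i.elim0, by simpa using hf⟩

lemma HasShortCocycles.forall_not_inNG_or_exists [DecidableEq V] {G : Set (Finset V)} {j d : ℕ}
    (h : HasShortCocycles G j d) (k : ℕ) :
    (∀ f, ¬InNG G k j f) ∨ ∃ f, InNG G k j f ∧ (cochainSupport f).ncard < d :=
  (h _ (coboundaries_le_generatedSubmodule G k j)).imp (fun hle _ hf => hf.2 (hle hf.1))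
    fun ⟨f, hf, hfW, hd⟩ => ⟨f, ⟨hf, hfW⟩, hd⟩

variable {k j n d : ℕ} {t : Finset (Fin n) → ℝ} {p : ℝ}

lemma isRelLowerSet_complexAt (k : ℕ) (t : Finset (Fin n) → ℝ) (p : ℝ) :
    IsRelLowerSet (complexAt k n t p) Finset.Nonempty := by
  rintro A (⟨v, rfl⟩ | ⟨hA, K, hK, ht, hAK⟩)
  · refine ⟨Finset.singleton_nonempty v, fun B hB hne => .inl ⟨v, ?_⟩⟩
    exact (Finset.subset_singleton_iff.1 hB).resolve_left hne.ne_empty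
  · exact ⟨hA, fun B hB hne => .inr ⟨hne, K, hK, ht, hB.trans hAK⟩⟩

lemma mem_complexAt_of_le {K : Finset (Fin n)} (hK : #K = k + 1) (ht : t K ≤ p) :
    K ∈ complexAt k n t p :=
  .inr ⟨Finset.card_pos.1 (by omega), K, hK, ht, subset_rfl⟩

lemma exists_superset_of_isSimplex_complexAt {i : ℕ} {A : Finset (Fin n)}
    (hA : IsSimplex (complexAt k n t p) (i + 1) A) : ∃ K, (#K = k + 1 ∧ t K ≤ p) ∧ A ⊆ K := by
  obtain ⟨⟨v, rfl⟩ | ⟨-, K, hK, ht, hAK⟩, hcard⟩ := hA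
  · simp at hcard
  · exact ⟨K, ⟨hK, ht⟩, hAK⟩

lemma exists_mem_obstructionEvent (hj : 1 ≤ j) {c w u : ℝ}
    (expansion : ∀ F : Finset (Finset (Fin n)), n * #F ≤ #(oddSets j F) * (j + 2) →
      c * #F * (n : ℝ) ^ (k - j) ≤ #(blockingSets k j F))
    (hp : p ∈ Set.Icc w u) (h : ¬HasShortCocycles (complexAt k n t p) j d) :
    ∃ s, d ≤ s ∧ ∃ σ, #σ = j + 1 ∧
      t ∈ obstructionEvent k j n (2 * s) (c * s * (n : ℝ) ^ (k - j)) w u σ := by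
  simp only [HasShortCocycles, not_forall, not_or, not_exists, not_and, not_lt] at h
  obtain ⟨W, hW, not_le, long⟩ := h
  obtain ⟨f, hf⟩ := IsMinimalCocycleOutside.exists_of_not_le not_le
  have hG := isRelLowerSet_complexAt k t p
  obtain ⟨σ, hσ⟩ := hf.suppFinset_nonempty
  have connected := hf.connectedVia (𝒢 := {K | #K = k + 1 ∧ t K ≤ p})
    fun A => exists_superset_of_isSimplex_complexAt
  obtain ⟨𝒦, born, hmem⟩ := exists_mem_explore_of_connectedVia connected
    (fun K hK => Finset.mem_powersetCard_univ.2 hK.1) hσ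
  have unborn : ∀ K ∈ blockingSets k j (suppFinset f), p < t K := by
    intro K hK
    by_contra! ht
    exact notMem_of_mem_blockingSets hG hf.mem_cocycles hK
      (mem_complexAt_of_le (mem_blockingSets.1 hK).1 ht)
  have many_odd := hf.card_mul_card_suppFinset_le hG hj hW
  rw [Fintype.card_fin] at many_odd
  exact ⟨#(suppFinset f), ncard_cochainSupport f ▸ long f hf.mem_cocycles hf.notMem, σ,
    (isSimplex_of_mem_suppFinset hσ).2, (suppFinset f, 𝒦), hmem, expansion _ many_odd, p, hp,
    fun K hK => (born hK).2, unborn⟩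

end ShortCocycles

section UnionBound

lemma eventually_sq_mul_exp_neg_le (a : ℝ) {c : ℝ} (hc : 0 < c) :
    ∀ᶠ y in atTop, (1 + a * y) ^ 2 * Real.exp (-(c * y)) ≤ Real.exp (-(c / 2 * y)) := by
  have pow_isLittleO (m : ℕ) : (· ^ m) =o[atTop] fun y => Real.exp (c / 2 * y) :=
    isLittleO_pow_exp_pos_mul_atTop m (half_pos hc)
  have sq_isLittleO := ((pow_isLittleO 0).add ((pow_isLittleO 1).const_mul_left (2 * a))).add
    ((pow_isLittleO 2).const_mul_left (a ^ 2))
  filter_upwards [sq_isLittleO.bound one_pos] with y hy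
  rw [one_mul, Real.norm_of_nonneg (Real.exp_nonneg _)] at hy
  calc (1 + a * y) ^ 2 * Real.exp (-(c * y))
      ≤ Real.exp (c / 2 * y) * Real.exp (-(c * y)) := by
        gcongr
        exact (le_of_eq (by ring)).trans ((Real.le_norm_self _).trans hy)
    _ = Real.exp (-(c / 2 * y)) := by
        rw [← Real.exp_add]
        ring_nf

lemma ofReal_exp_neg_pow_le_inv_pow {n m d : ℕ} {b : ℝ} (hn : 0 < n)
    (h : m * Real.log n ≤ d * b) :
    ENNReal.ofReal (Real.exp (-b)) ^ d ≤ ((n : ℝ≥0∞) ^ m)⁻¹ := by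
  have hn' : (0 : ℝ) < n := Nat.cast_pos.2 hn
  calc ENNReal.ofReal (Real.exp (-b)) ^ d = .ofReal (Real.exp (-(d * b))) := by
        rw [← ENNReal.ofReal_pow (Real.exp_nonneg _), ← Real.exp_nat_mul, mul_neg]
    _ ≤ .ofReal (Real.exp (-(m * Real.log n))) := by gcongr
    _ = ((n : ℝ≥0∞) ^ m)⁻¹ := by
        rw [Real.exp_neg, ENNReal.ofReal_inv_of_pos (Real.exp_pos _), Real.exp_nat_mul,
          Real.exp_log hn', ENNReal.ofReal_pow hn'.le, ENNReal.ofReal_natCast]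

lemma exists_mem_Icc_mul {p₀ p : ℝ} (hp₀ : 0 < p₀) (hp : p₀ ≤ p) :
    ∃ r : ℕ, p ∈ Set.Icc ((r + 1) * p₀) ((r + 2) * p₀) := by
  have one_le : 1 ≤ p / p₀ := (one_le_div hp₀).2 hp
  refine ⟨⌊p / p₀ - 1⌋₊, (le_div_iff₀ hp₀).1 ?_, (div_le_iff₀ hp₀).1 ?_⟩
  · linarith [Nat.floor_le (sub_nonneg.2 one_le)]
  · linarith [Nat.lt_floor_add_one (p / p₀ - 1)]

lemma tsum_tsum_pow_le {z : ℝ≥0∞} (hz : z ≤ 2⁻¹) {d : ℕ} (hd : 1 ≤ d) :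
    ∑' r : ℕ, ∑' s : ℕ, z ^ ((r + 1) * (s + d)) ≤ 4 * z ^ d := by
  have geometric : (1 - z)⁻¹ ≤ 2 := by
    rw [ENNReal.inv_le_iff_inv_le, ← ENNReal.one_sub_inv_two]
    exact tsub_le_tsub_left hz 1
  calc ∑' r : ℕ, ∑' s : ℕ, z ^ ((r + 1) * (s + d))
      ≤ ∑' r : ℕ, ∑' s : ℕ, z ^ r * (z ^ s * z ^ d) := by
        gcongr with r s
        rw [← pow_add, ← pow_add]
        exact pow_le_pow_right_of_le_one' (hz.trans (by simp))
          (by nlinarith [Nat.zero_le (r * s), Nat.mul_le_mul_left r hd])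
    _ = (1 - z)⁻¹ * ((1 - z)⁻¹ * z ^ d) := by
        simp_rw [ENNReal.tsum_mul_left, ENNReal.tsum_mul_right, ENNReal.tsum_geometric]
    _ ≤ 2 * (2 * z ^ d) := by gcongr
    _ = 4 * z ^ d := by ring

lemma one_add_mul_ofReal_le {N : ℕ} {u v : ℝ} (hv : 0 ≤ v) (h : N * u ≤ v) (b : ℕ) :
    1 + N * 2 ^ b * ENNReal.ofReal u ≤ .ofReal (1 + 2 ^ b * v) := by
  rw [ENNReal.ofReal_add zero_le_one (by positivity), ENNReal.ofReal_one,
    ENNReal.ofReal_mul (by positivity), ENNReal.ofReal_pow zero_le_two, ENNReal.ofReal_ofNat,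
    mul_right_comm, mul_comm, ← ENNReal.ofReal_natCast, ← ENNReal.ofReal_mul N.cast_nonneg]
  gcongr

variable {k j n d : ℕ} {c p₀ : ℝ}

lemma birthMeasure_obstructionEvent_le_pow (hjk : j ≤ k) (hp₀ : 0 ≤ p₀)
    (decay : ∀ y ≥ p₀ * n ^ (k - j),
      (1 + 2 ^ (k + 1).choose (j + 1) * 2 * y) ^ 2 * Real.exp (-(c * y)) ≤
        Real.exp (-(c / 2 * y))) (r s : ℕ) (σ : Finset (Fin n)) :
    birthMeasure n (obstructionEvent k j n (2 * s) (c * s * (n : ℝ) ^ (k - j)) ((r + 1) * p₀)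
      ((r + 2) * p₀) σ) ≤
      .ofReal (Real.exp (-(c / 2 * (p₀ * n ^ (k - j))))) ^ ((r + 1) * s) := by
  set b := (k + 1).choose (j + 1)
  set x := p₀ * n ^ (k - j) with hx
  set y := (r + 1) * x with hy
  have hx0 : 0 ≤ x := by positivity
  have hxy : x ≤ y := le_mul_of_one_le_left hx0 (by simp)
  have : 0 ≤ y := hx0.trans hxy
  have branching_le : 1 + (n ^ (k - j) : ℕ) * 2 ^ b * ENNReal.ofReal ((r + 2) * p₀) ≤
      .ofReal (1 + 2 ^ b * 2 * y) := by
    rw [mul_assoc (2 ^ b)]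
    refine one_add_mul_ofReal_le (by positivity) ?_ b
    calc (n ^ (k - j) : ℕ) * ((r + 2) * p₀) = (r + 2) * x := by rw [hx, Nat.cast_pow]; ring
      _ ≤ 2 * y := by linarith [mul_nonneg (Nat.cast_nonneg (α := ℝ) r) hx0]
  calc _ ≤ ENNReal.ofReal (1 + 2 ^ b * 2 * y) ^ (2 * s) * .ofReal (Real.exp (-(s * (c * y)))) := by
        refine (birthMeasure_obstructionEvent_le hjk (by positivity) σ).trans ?_
        rw [show (r + 1) * p₀ * (c * s * (n : ℝ) ^ (k - j)) = s * (c * y) by rw [hy, hx]; ring]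
        gcongr
    _ = .ofReal (((1 + 2 ^ b * 2 * y) ^ 2 * Real.exp (-(c * y))) ^ s) := by
        rw [← ENNReal.ofReal_pow (by positivity), ← ENNReal.ofReal_mul (by positivity), mul_pow,
          ← pow_mul, ← Real.exp_nat_mul, mul_neg]
    _ ≤ .ofReal (Real.exp (-(c / 2 * y)) ^ s) := by
        gcongr
        exact decay y hxy
    _ = .ofReal (Real.exp (-(c / 2 * x))) ^ ((r + 1) * s) := by
        rw [show -(c / 2 * y) = (r + 1 : ℕ) * -(c / 2 * x) by rw [hy]; push_cast; ring,
          Real.exp_nat_mul, ← pow_mul, ENNReal.ofReal_pow (Real.exp_nonneg _)]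

lemma birthMeasure_compl_hasShortCocycles_le (hj : 1 ≤ j) (hjk : j ≤ k) (hd : 1 ≤ d) (hp₀ : 0 < p₀)
    (expansion : ∀ F : Finset (Finset (Fin n)), n * #F ≤ #(oddSets j F) * (j + 2) →
      c * #F * (n : ℝ) ^ (k - j) ≤ #(blockingSets k j F))
    (decay : ∀ y ≥ p₀ * n ^ (k - j),
      (1 + 2 ^ (k + 1).choose (j + 1) * 2 * y) ^ 2 * Real.exp (-(c * y)) ≤
        Real.exp (-(c / 2 * y)))
    {z : ℝ≥0∞} (hz : z = .ofReal (Real.exp (-(c / 2 * (p₀ * n ^ (k - j)))))) (hz2 : z ≤ 2⁻¹) :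
    birthMeasure n {t | ∀ p, p₀ ≤ p → HasShortCocycles (complexAt k n t p) j d}ᶜ ≤
      n ^ (j + 1) * (4 * z ^ d) := by
  let event (r s : ℕ) (σ : Finset (Fin n)) := obstructionEvent k j n (2 * (s + d))
    (c * (s + d : ℕ) * (n : ℝ) ^ (k - j)) ((r + 1) * p₀) ((r + 2) * p₀) σ
  have cover : {t | ∀ p, p₀ ≤ p → HasShortCocycles (complexAt k n t p) j d}ᶜ ⊆
      ⋃ r, ⋃ s, ⋃ σ ∈ Finset.powersetCard (j + 1) Finset.univ, event r s σ := by
    intro t ht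
    simp only [Set.mem_compl_iff, Set.mem_ofPred_eq, not_forall] at ht
    obtain ⟨p, hp, hshort⟩ := ht
    obtain ⟨r, hr⟩ := exists_mem_Icc_mul hp₀ hp
    obtain ⟨s, hs, σ, hσ, hmem⟩ := exists_mem_obstructionEvent hj expansion hr hshort
    obtain ⟨s, rfl⟩ := Nat.exists_eq_add_of_le' hs
    simp only [Set.mem_iUnion, Finset.mem_powersetCard_univ]
    exact ⟨r, s, σ, hσ, hmem⟩
  have event_le (r s : ℕ) : birthMeasure n (⋃ σ ∈ Finset.powersetCard (j + 1) Finset.univ,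
      event r s σ) ≤ n ^ (j + 1) * z ^ ((r + 1) * (s + d)) := by
    calc _ ≤ ∑ σ ∈ Finset.powersetCard (j + 1) Finset.univ, birthMeasure n (event r s σ) :=
          measure_biUnion_finset_le _ _
      _ ≤ (n.choose (j + 1) : ℕ) * z ^ ((r + 1) * (s + d)) := by
          refine (Finset.sum_le_card_nsmul _ _ _ fun σ _ => hz ▸
            birthMeasure_obstructionEvent_le_pow hjk hp₀.le decay r (s + d) σ).trans_eq ?_
          rw [nsmul_eq_mul, Finset.card_powersetCard, Finset.card_univ, Fintype.card_fin]
      _ ≤ n ^ (j + 1) * z ^ ((r + 1) * (s + d)) := by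
          gcongr
          exact_mod_cast Nat.choose_le_pow n (j + 1)
  calc _ ≤ ∑' r, ∑' s, birthMeasure n (⋃ σ ∈ Finset.powersetCard (j + 1) Finset.univ,
          event r s σ) :=
        (measure_mono cover).trans ((measure_iUnion_le _).trans
          (ENNReal.tsum_le_tsum fun r => measure_iUnion_le _))
    _ ≤ ∑' r : ℕ, ∑' s : ℕ, n ^ (j + 1) * z ^ ((r + 1) * (s + d)) := by
        gcongr with r s
        exact event_le r s
    _ ≤ n ^ (j + 1) * (4 * z ^ d) := by
        simp_rw [ENNReal.tsum_mul_left]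
        gcongr
        exact tsum_tsum_pow_le hz2 hd

end UnionBound

section Main

/-- The events `E n`, read off the birth times on `[n]`, hold with high probability. -/
def Whp (E : ∀ n, Set (Finset (Fin n) → ℝ)) : Prop :=
  Tendsto (fun n => birthMeasure n (E n)) atTop (nhds 1)

namespace Whp

variable {E E' : ∀ n, Set (Finset (Fin n) → ℝ)}

lemma mono (hE : Whp E) (h : ∀ n, E n ⊆ E' n) : Whp E' :=
  tendsto_of_tendsto_of_tendsto_of_le_of_le hE tendsto_const_nhds
    (fun n => measure_mono (h n)) fun _ => prob_le_one

lemma of_tendsto_compl (hE : Tendsto (fun n => birthMeasure n (E n)ᶜ) atTop (nhds 0)) : Whp E := by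
  have lower : Tendsto (fun n => 1 - birthMeasure n (E n)ᶜ) atTop (nhds 1) := by
    simpa using ENNReal.Tendsto.sub tendsto_const_nhds hE (.inl ENNReal.one_ne_top)
  refine tendsto_of_tendsto_of_tendsto_of_le_of_le lower tendsto_const_nhds (fun n => ?_)
    fun _ => prob_le_one
  rw [tsub_le_iff_right, ← measure_univ (μ := birthMeasure n)]
  exact measure_univ_le_add_compl _

end Whp

variable {k j : ℕ}

lemma eventually_birthMeasure_compl_le {ε c : ℝ} (hj : 1 ≤ j) (hjk : j ≤ k) (hε : 0 < ε)
    (hc : 0 < c)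
    (expansion : ∀ n, 2 * k ≤ n → ∀ F : Finset (Finset (Fin n)),
      n * #F ≤ #(oddSets j F) * (j + 2) → c * #F * (n : ℝ) ^ (k - j) ≤ #(blockingSets k j F))
    {p₀ : ℕ → ℝ} (hp₀ : ∀ᶠ n : ℕ in atTop, ε * Real.log n ≤ p₀ n * n ^ (k - j)) {d : ℕ}
    (hd0 : 1 ≤ d) (hd : j + 2 ≤ d * (c / 2 * ε)) :
    ∀ᶠ n : ℕ in atTop, birthMeasure n {t | ∀ p, p₀ n ≤ p →
      HasShortCocycles (complexAt k n t p) j d}ᶜ ≤ 4 * (n : ℝ≥0∞)⁻¹ := by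
  have log_tendsto : Tendsto (fun n : ℕ => Real.log n) atTop atTop :=
    Real.tendsto_log_atTop.comp tendsto_natCast_atTop_atTop
  have tendsto_weight : Tendsto (fun n : ℕ => p₀ n * (n : ℝ) ^ (k - j)) atTop atTop :=
    tendsto_atTop_mono' _ hp₀ (log_tendsto.const_mul_atTop hε)
  have decay := eventually_forall_ge_atTop.2
    (eventually_sq_mul_exp_neg_le (2 ^ (k + 1).choose (j + 1) * 2) hc)
  filter_upwards [hp₀, tendsto_weight.eventually decay, tendsto_weight.eventually_gt_atTop 0,
    tendsto_weight.eventually_ge_atTop (Real.log 2 / (c / 2)), eventually_ge_atTop (2 * k),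
    eventually_gt_atTop 0] with n hlog decay hpos hlarge hn hn0
  rw [div_le_iff₀' (half_pos hc)] at hlarge
  set z := ENNReal.ofReal (Real.exp (-(c / 2 * (p₀ n * n ^ (k - j))))) with hz
  have z_le_half : z ≤ 2⁻¹ := by
    simpa using ofReal_exp_neg_pow_le_inv_pow two_pos (m := 1) (d := 1) (by simpa using hlarge)
  have z_pow_le : z ^ d ≤ ((n : ℝ≥0∞) ^ (j + 2))⁻¹ := by
    refine ofReal_exp_neg_pow_le_inv_pow hn0 ?_
    calc ((j + 2 : ℕ) : ℝ) * Real.log n ≤ d * (c / 2 * ε) * Real.log n := by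
          push_cast
          gcongr
      _ = d * (c / 2 * (ε * Real.log n)) := by ring
      _ ≤ d * (c / 2 * (p₀ n * n ^ (k - j))) := by gcongr
  have hn_ne : (n : ℝ≥0∞) ^ (j + 1) ≠ 0 := by positivity
  calc _ ≤ n ^ (j + 1) * (4 * z ^ d) := birthMeasure_compl_hasShortCocycles_le hj hjk hd0
        (pos_of_mul_pos_left hpos (by positivity)) (expansion n hn) decay hz z_le_half
    _ ≤ n ^ (j + 1) * (4 * ((n : ℝ≥0∞) ^ (j + 2))⁻¹) := by gcongr
    _ = 4 * (n ^ (j + 1) * ((n : ℝ≥0∞) ^ (j + 1))⁻¹) * (n : ℝ≥0∞)⁻¹ := by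
        rw [pow_succ _ (j + 1), ENNReal.mul_inv (.inl hn_ne) (.inr (by positivity))]
        ring
    _ = 4 * (n : ℝ≥0∞)⁻¹ := by
        rw [ENNReal.mul_inv_cancel hn_ne (by finiteness), mul_one]

theorem statement18_general (hj : 1 ≤ j) (hjk : j < k) {ε : ℝ} (hε : 0 < ε) {p₀ : ℕ → ℝ}
    (hp₀ : ∀ᶠ n : ℕ in atTop, ε * Real.log n ≤ p₀ n * n ^ (k - j)) :
    ∃ d : ℕ, 0 < d ∧
      Whp fun n => {t | ∀ p, p₀ n ≤ p → HasShortCocycles (complexAt k n t p) j d} := by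
  obtain ⟨c, hc, expansion⟩ := exists_mul_card_le_card_blockingSets hjk
  obtain ⟨d, hd⟩ := exists_nat_ge ((j + 2) / (c / 2 * ε))
  rw [div_le_iff₀ (by positivity)] at hd
  have hd0 : 0 < d := by
    by_contra! h
    rw [Nat.le_zero.1 h] at hd
    norm_num at hd
    linarith [(j.cast_nonneg : (0 : ℝ) ≤ j)]
  refine ⟨d, hd0, .of_tendsto_compl ?_⟩
  have bound_tendsto : Tendsto (fun n : ℕ => 4 * (n : ℝ≥0∞)⁻¹) atTop (nhds 0) := by
    simpa using ENNReal.Tendsto.const_mul ENNReal.tendsto_inv_nat_nhds_zero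
      (.inr (by simp : (4 : ℝ≥0∞) ≠ ⊤))
  exact tendsto_of_tendsto_of_tendsto_of_le_of_le' tendsto_const_nhds bound_tendsto
    (.of_forall fun _ => zero_le)
    (eventually_birthMeasure_compl_le hj hjk.le hε hc expansion hp₀ hd0 hd)

lemma exists_log_le_pjMinus_mul_pow (k j : ℕ) :
    ∃ ε > 0, ∀ᶠ n : ℕ in atTop, ε * Real.log n ≤ pjMinus k j n * n ^ (k - j) := by
  refine ⟨(j + 1) * (k - j).factorial / (2 * (k - j + 1 : ℕ)), by positivity, ?_⟩
  filter_upwards [(Real.tendsto_log_atTop.comp tendsto_natCast_atTop_atTop).eventually_ge_atTop 4,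
    eventually_gt_atTop 0] with n hlog hn
  simp only [Function.comp_apply] at hlog
  have half_le : 1 / 2 ≤ 1 - 1 / √(Real.log n) := by
    have two_le : 2 ≤ √(Real.log n) := Real.le_sqrt_of_sq_le (by linarith)
    linarith [one_div_le_one_div_of_le two_pos two_le]
  calc _ = 1 / 2 * ((j + 1) * Real.log n * (k - j).factorial / (k - j + 1 : ℕ)) := by
        field_simp
    _ ≤ (1 - 1 / √(Real.log n)) *
        ((j + 1) * Real.log n * (k - j).factorial / (k - j + 1 : ℕ)) := by gcongr
    _ = pjMinus k j n * n ^ (k - j) := by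
        rw [pjMinus]
        field_simp

end Main

/-- Lemma 5.5: there is a constant `d̄ > 0` such that whp, for all `p ≥ p_j^-`
simultaneously, either `N_{G_p}` is empty or the minimum support size of an element of
`N_{G_p}` is less than `d̄`. -/
theorem statement18 (k j : ℕ) (hk : 2 ≤ k) (hj : 1 ≤ j) (hjk : j < k) :
    ∃ d : ℝ, 0 < d ∧
      Tendsto (fun n : ℕ => birthMeasure n {t : Finset (Fin n) → ℝ |
        ∀ p : ℝ, pjMinus k j n ≤ p →
          ((∀ f : Cochain (complexAt k n t p) j, ¬ InNG (complexAt k n t p) k j f) ∨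
            (∃ f : Cochain (complexAt k n t p) j, InNG (complexAt k n t p) k j f ∧
              ((cochainSupport f).ncard : ℝ) < d))})
        atTop (nhds 1) := by
  obtain ⟨ε, hε, hp₀⟩ := exists_log_le_pjMinus_mul_pow k j
  obtain ⟨d, hd, h⟩ := statement18_general hj hjk hε hp₀
  exact ⟨d, Nat.cast_pos.2 hd, h.mono fun n t ht p hp => by
    exact_mod_cast (ht p hp).forall_not_inNG_or_exists k⟩

end RSC
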